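/- Let S be a semigroup with identity acting on a compact Hausdorff space X from the left (so that x ↦ s·x is continuous for each s ∈ S). Then the following are equivalent: (i) there exists a left S-invariant Radon probability measure on X; (ii) for every n ≥ 1, all elements s_1, …, s_n of S and all functions f_1, …, f_n ∈ C(X), one has ‖1 − Σ_{i=1}^n (f_i·s_i − f_i)‖_∞ ≥ 1, where 1 denotes the constant function 1 and ‖·‖_∞ the supremum norm on C(X). -/

import Mathlib

open BoundedContinuousFunction MeasureTheory Filter Topology

noncomputable section

/-- The finite sums of coboundaries. -/
def cobSpan {S X : Type*} [Monoid S] [TopologicalSpace X] [MulAction S X]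
    (hc : ∀ s : S, Continuous fun x : X => s • x) : Submodule ℝ C(X, ℝ) :=
  Submodule.span ℝ (Set.range fun p : S × C(X, ℝ) =>
    p.2.comp ⟨fun x => p.1 • x, hc p.1⟩ - p.2)

lemma cobSpan_rep {S X : Type*} [Monoid S] [TopologicalSpace X] [MulAction S X]
    (hc : ∀ s : S, Continuous fun x : X => s • x) (v : C(X, ℝ)) (hv : v ∈ cobSpan hc) :
    ∃ n : ℕ, 1 ≤ n ∧ ∃ (s : Fin n → S) (f : Fin n → C(X, ℝ)),
      v = ∑ i, ((f i).comp ⟨fun x => s i • x, hc (s i)⟩ - f i) := by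
  unfold cobSpan at hv
  induction hv using Submodule.span_induction with
  | mem x h =>
    obtain ⟨p, rfl⟩ := h
    exact ⟨1, le_rfl, fun _ => p.1, fun _ => p.2, by simp⟩
  | zero =>
    refine ⟨1, le_rfl, fun _ => 1, fun _ => 0, ?_⟩
    ext x; simp
  | add x y _ _ hx hy =>
    obtain ⟨n, hn, s, f, rfl⟩ := hx
    obtain ⟨m, hm, t, g, rfl⟩ := hy
    refine ⟨n + m, by omega, Fin.append s t, Fin.append f g, ?_⟩
    rw [Fin.sum_univ_add]
    simp
  | smul a x _ hx =>
    obtain ⟨n, hn, s, f, rfl⟩ := hx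
    refine ⟨n, hn, s, fun i => a • f i, ?_⟩
    ext x
    simp [Finset.mul_sum, mul_sub]

lemma exists_functional {S X : Type*} [Monoid S] [TopologicalSpace X] [CompactSpace X]
    [MulAction S X] (hc : ∀ s : S, Continuous fun x : X => s • x)
    (H : ∀ (n : ℕ), 1 ≤ n → ∀ (s : Fin n → S) (f : Fin n → C(X, ℝ)),
        1 ≤ ‖(1 : C(X, ℝ)) - ∑ i, ((f i).comp ⟨fun x => s i • x, hc (s i)⟩ - f i)‖) :
    ∃ L : C(X, ℝ) →ₗ[ℝ] ℝ, L 1 = 1 ∧ (∀ g, 0 ≤ g → 0 ≤ L g) ∧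
      ∀ (f : C(X, ℝ)) (s : S), L (f.comp ⟨fun x => s • x, hc s⟩) = L f := by
  have hd : Disjoint (Metric.ball (1 : C(X, ℝ)) 1) (cobSpan hc : Set C(X, ℝ)) := by
    rw [Set.disjoint_left]
    intro v hv hv'
    obtain ⟨n, hn, s, f, rfl⟩ := cobSpan_rep hc v hv'
    have h1 := H n hn s f
    rw [Metric.mem_ball, dist_comm, dist_eq_norm] at hv
    linarith
  obtain ⟨φ, u, h1, h2⟩ := geometric_hahn_banach_open (convex_ball (1 : C(X, ℝ)) 1)
    Metric.isOpen_ball (cobSpan hc).convex hd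
  have hu : u ≤ 0 := by simpa using h2 0 (Submodule.zero_mem _)
  have hφ1 : φ 1 < 0 := (h1 1 (by simp)).trans_le hu
  have hV : ∀ v ∈ cobSpan hc, φ v = 0 := by
    intro v hv
    by_contra hne
    have h3 := h2 (((u - 1) / φ v) • v) (Submodule.smul_mem _ _ hv)
    rw [map_smul, smul_eq_mul, div_mul_cancel₀ _ hne] at h3
    linarith
  have hcl : ∀ a ∈ Metric.closedBall (1 : C(X, ℝ)) 1, φ a ≤ 0 := by
    rw [← closure_ball (1 : C(X, ℝ)) one_ne_zero]
    intro a ha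
    exact closure_minimal (fun b hb => ((h1 b hb).trans_le hu).le)
      (isClosed_le φ.continuous continuous_const) ha
  refine ⟨(φ 1)⁻¹ • (φ : C(X, ℝ) →ₗ[ℝ] ℝ), ?_, ?_, ?_⟩
  · simp [hφ1.ne]
  · intro g hg
    have hp : 0 < ‖g‖ + 1 := by positivity
    have h3 := hcl ((‖g‖ + 1)⁻¹ • g) (by
      rw [Metric.mem_closedBall, dist_eq_norm, ContinuousMap.norm_le _ zero_le_one]
      intro x
      have hx : 0 ≤ g x := hg x
      have hx' : g x ≤ ‖g‖ := (le_abs_self _).trans (g.norm_coe_le_norm x)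
      have ha : 0 ≤ (‖g‖ + 1)⁻¹ * g x := by positivity
      have hb : (‖g‖ + 1)⁻¹ * g x ≤ 1 := by
        rw [inv_mul_le_iff₀ hp]; linarith
      simp only [ContinuousMap.sub_apply, ContinuousMap.smul_apply, smul_eq_mul,
        ContinuousMap.one_apply, Real.norm_eq_abs]
      rw [abs_le]; constructor <;> linarith)
    rw [map_smul, smul_eq_mul] at h3
    have h4 : φ g ≤ 0 := by
      by_contra hh
      have := mul_pos (inv_pos.2 hp) (not_le.1 hh)
      linarith
    exact mul_nonneg_of_nonpos_of_nonpos (inv_nonpos.2 hφ1.le) h4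
  · intro f s
    have h3 := hV _ (Submodule.subset_span ⟨(s, f), rfl⟩)
    simp only [map_sub] at h3
    simp [sub_eq_zero.1 h3]

/-- Fact 4.2: for a semigroup `S` with identity acting on a compact Hausdorff space `X`
(with `x ↦ s • x` continuous for each `s`), a left `S`-invariant Radon probability measure
on `X` exists iff `‖1 - ∑ i (f i · s i - f i)‖ ≥ 1` for all finite data. -/
theorem invariant_radon_measure_iff_norm_condition
    {S X : Type*} [Monoid S] [TopologicalSpace X] [CompactSpace X] [T2Space X]
    [MeasurableSpace X] [BorelSpace X] [MulAction S X]
    (hc : ∀ s : S, Continuous fun x : X => s • x) :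
    (∃ μ : Measure X, IsProbabilityMeasure μ ∧ μ.Regular ∧
        ∀ (f : C(X, ℝ)) (s : S), ∫ x, f (s • x) ∂μ = ∫ x, f x ∂μ) ↔
      ∀ (n : ℕ), 1 ≤ n → ∀ (s : Fin n → S) (f : Fin n → C(X, ℝ)),
        1 ≤ ‖(1 : C(X, ℝ)) - ∑ i, ((f i).comp ⟨fun x => s i • x, hc (s i)⟩ - f i)‖ := by
  constructor
  · rintro ⟨μ, hμ, -, hinv⟩ n - s f
    have hint : ∀ g : C(X, ℝ), Integrable g μ := fun g =>
      g.continuous.integrable_of_hasCompactSupport (HasCompactSupport.of_compactSpace g)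
    set g := (1 : C(X, ℝ)) - ∑ i, ((f i).comp ⟨fun x => s i • x, hc (s i)⟩ - f i) with hg
    have h1 : ∫ x, g x ∂μ = 1 := by
      have h0 : ∀ x, g x = 1 - ∑ i, ((f i).comp ⟨fun x => s i • x, hc (s i)⟩ x - f i x) := by
        intro x; simp [hg]
      simp_rw [h0]
      have hi : ∀ i, Integrable
          (fun x => (f i).comp ⟨fun x => s i • x, hc (s i)⟩ x - f i x) μ :=
        fun i => (hint _).sub (hint _)
      rw [integral_sub (integrable_const _) (integrable_finsetSum _ fun i _ => hi i),
        integral_finsetSum _ fun i _ => hi i]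
      have : ∀ i, ∫ x, ((f i).comp ⟨fun x => s i • x, hc (s i)⟩ x - f i x) ∂μ = 0 := by
        intro i
        rw [integral_sub (hint _) (hint _), sub_eq_zero]
        exact hinv (f i) (s i)
      rw [Finset.sum_eq_zero fun i _ => this i]
      simp
    have h2 := norm_integral_le_of_norm_le_const (μ := μ) (f := g) (C := ‖g‖)
      (Eventually.of_forall fun x => g.norm_coe_le_norm x)
    rw [h1] at h2
    simpa using h2
  · intro H
    obtain ⟨L, hL1, hLp, hLs⟩ := exists_functional hc H
    let Λ : CompactlySupportedContinuousMap X ℝ →ₚ[ℝ] ℝ := PositiveLinearMap.mk₀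
      { toFun := fun g => L g.toContinuousMap
        map_add' := fun g g' => L.map_add g.toContinuousMap g'.toContinuousMap
        map_smul' := fun c g => L.map_smul c g.toContinuousMap } (fun g hg => hLp _ hg)
    have key : ∀ g : C(X, ℝ), ∫ x, g x ∂(RealRMK.rieszMeasure Λ) = L g := fun g =>
      RealRMK.integral_rieszMeasure Λ ⟨g, HasCompactSupport.of_compactSpace g⟩
    refine ⟨RealRMK.rieszMeasure Λ, ⟨?_⟩, inferInstance, ?_⟩
    · have h := key 1
      rw [hL1] at h
      simp [Measure.real] at h
      exact (ENNReal.toReal_eq_one_iff _).1 h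
    · intro f s
      have h := key (f.comp ⟨fun x => s • x, hc s⟩)
      rw [hLs, ← key f] at h
      exact h
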